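/- Let f = p/q be a rational function of two real variables that is unbounded on every punctured neighborhood of (x₀,y₀) (i.e. for every neighborhood U of (x₀,y₀) and every M there is v ∈ U with q(v) ≠ 0 and |f(v)| > M). Then there exists a function Φ of type (i) such that at least one of the following holds: |f(x, y₀+Φ(x−x₀))| → ∞ as x→x₀⁺, or as x→x₀⁻, or |f(x₀+Φ(y−y₀), y)| → ∞ as y→y₀⁺, or as y→y₀⁻ (limits taken through points where q is nonzero). -/

import Mathlib

open MvPolynomial Filter Topology

/-- Evaluation of a two-variable real polynomial at a point of `ℝ²`. -/
noncomputable def pev (p : MvPolynomial (Fin 2) ℝ) (v : ℝ × ℝ) : ℝ :=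
  MvPolynomial.eval ![v.1, v.2] p

/-- `Φ` is a function of type (i). -/
def TypeI (Φ : ℝ → ℝ) : Prop :=
  ∃ (N : ℕ) (φ : Fin N → ℝ) (e : Fin N → ℚ),
    (∀ k, φ k ≠ 0) ∧ StrictMono e ∧ (∀ k, 1 ≤ e k) ∧
    ∀ t : ℝ, Φ t = ∑ k, φ k * |t| ^ ((e k : ℝ))


/-- Evaluation of `P ∈ ℝ[y][x]` at `(x, y)`. -/
noncomputable def ev (P : Polynomial (Polynomial ℝ)) (x y : ℝ) : ℝ := P.evalEval y x

/-- The coefficient of `x^i y^j`. -/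
noncomputable def cf (P : Polynomial (Polynomial ℝ)) (i j : ℕ) : ℝ := (P.coeff i).coeff j

/-- Order of `P(0,y)` at `y = 0`. -/
noncomputable def od (P : Polynomial (Polynomial ℝ)) : ℕ := (P.coeff 0).natTrailingDegree

lemma exists_bound (P : Polynomial (Polynomial ℝ)) :
    ∃ M : ℕ, ∀ i j, cf P i j ≠ 0 → i < M ∧ j < M := by
  refine ⟨(P.natDegree + 1) + ∑ i ∈ Finset.range (P.natDegree + 1), ((P.coeff i).natDegree + 1), ?_⟩
  intro i j h
  have hi : i < P.natDegree + 1 := by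
    by_contra hi
    apply h
    have : P.coeff i = 0 := Polynomial.coeff_eq_zero_of_natDegree_lt (by omega)
    simp [cf, this]
  have hj : j < (P.coeff i).natDegree + 1 := by
    by_contra hj
    exact h (Polynomial.coeff_eq_zero_of_natDegree_lt (by omega))
  have := Finset.single_le_sum (f := fun i => (P.coeff i).natDegree + 1) (fun _ _ => Nat.zero_le _)
    (Finset.mem_range.2 hi)

  omega

lemma ev_eq_sum (P : Polynomial (Polynomial ℝ)) (M : ℕ)
    (hM : ∀ i j, cf P i j ≠ 0 → i < M ∧ j < M) (x y : ℝ) :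
    ev P x y = ∑ i ∈ Finset.range M, ∑ j ∈ Finset.range M, cf P i j * (x ^ i * y ^ j) := by
  have hj : ∀ i, (P.coeff i).natDegree ≤ M := by
    intro i
    rw [Polynomial.natDegree_le_iff_coeff_eq_zero]
    intro N hN
    by_contra h
    have := hM i N h
    omega
  have hP : P.natDegree ≤ M := by
    rw [Polynomial.natDegree_le_iff_coeff_eq_zero]
    intro N hN
    ext j
    by_contra h
    have := hM N j (by simpa [cf] using h)
    omega
  have h0 : ∀ i, (P.coeff i).eval y = ∑ j ∈ Finset.range M, cf P i j * y ^ j := by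
    intro i
    rw [Polynomial.eval_eq_sum_range' (n := M + 1) (by have := hj i; omega), Finset.sum_range_succ]
    have : (P.coeff i).coeff M = 0 := by
      by_contra h
      have := hM i M h
      omega
    simp [this, cf]
  rw [ev, Polynomial.evalEval, Polynomial.eval_eq_sum_range' (p := P) (n := M + 1) (by omega),
    Finset.sum_range_succ]
  have : P.coeff M = 0 := by
    ext j
    by_contra h
    have := hM M j (by simpa [cf] using h)
    omega
  rw [this]
  simp only [zero_mul, add_zero, Polynomial.eval_finsetSum, Polynomial.eval_mul, h0,
    Polynomial.eval_pow, Polynomial.eval_C]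
  refine Finset.sum_congr rfl fun i _ => ?_
  rw [Finset.sum_mul]
  refine Finset.sum_congr rfl fun j _ => ?_
  ring

lemma ev_zero (P : Polynomial (Polynomial ℝ)) : ev P 0 0 = cf P 0 0 := by
  simp [ev, cf, Polynomial.evalEval, Polynomial.coeff_zero_eq_eval_zero]

lemma ev_continuous (P : Polynomial (Polynomial ℝ)) : Continuous (fun v : ℝ × ℝ => ev P v.1 v.2) := by
  obtain ⟨M, hM⟩ := exists_bound P
  simp only [ev_eq_sum P M hM]
  fun_prop

lemma ev_tendsto {ι : Type*} {l : Filter ι} (P : Polynomial (Polynomial ℝ)) {x y : ι → ℝ}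
    (hx : Tendsto x l (𝓝 0)) (hy : Tendsto y l (𝓝 0)) :
    Tendsto (fun n => ev P (x n) (y n)) l (𝓝 (cf P 0 0)) := by
  rw [← ev_zero]
  exact ((ev_continuous P).tendsto (0, 0)).comp (hx.prodMk_nhds hy)

lemma od_coeff_ne (P : Polynomial (Polynomial ℝ)) (h : P.coeff 0 ≠ 0) : cf P 0 (od P) ≠ 0 := by
  have := Polynomial.trailingCoeff_nonzero_iff_nonzero.2 h
  exact this

lemma od_coeff_lt (P : Polynomial (Polynomial ℝ)) {j : ℕ} (h : j < od P) : cf P 0 j = 0 :=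
  Polynomial.coeff_eq_zero_of_lt_natTrailingDegree h

/-- Every monomial of `P` lies on or above the line of weight `k * od P`. -/
def Wt (k : ℕ) (P : Polynomial (Polynomial ℝ)) : Prop :=
  ∀ i j, cf P i j ≠ 0 → k * od P ≤ i + k * j

/-- Edge polynomial. -/
noncomputable def edge (k : ℕ) (P : Polynomial (Polynomial ℝ)) : Polynomial ℝ :=
  ∑ j ∈ Finset.range (od P + 1), Polynomial.C (cf P (k * (od P - j)) j) * Polynomial.X ^ j

lemma edge_coeff (k : ℕ) (P : Polynomial (Polynomial ℝ)) (j : ℕ) :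
    (edge k P).coeff j = if j ≤ od P then cf P (k * (od P - j)) j else 0 := by
  simp only [edge, Polynomial.finsetSum_coeff, Polynomial.coeff_C_mul_X_pow]
  rw [Finset.sum_ite_eq]
  simp

lemma edge_natDegree (k : ℕ) (P : Polynomial (Polynomial ℝ)) (h : P.coeff 0 ≠ 0) :
    (edge k P).natDegree = od P := by
  apply le_antisymm
  · rw [Polynomial.natDegree_le_iff_coeff_eq_zero]
    intro N hN
    rw [edge_coeff, if_neg (by omega)]
  · apply Polynomial.le_natDegree_of_ne_zero
    rw [edge_coeff]
    simpa using od_coeff_ne P h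

lemma edge_ne_zero (k : ℕ) (P : Polynomial (Polynomial ℝ)) (h : P.coeff 0 ≠ 0) : edge k P ≠ 0 := by
  intro h0
  have : (edge k P).coeff (od P) = 0 := by simp [h0]
  rw [edge_coeff] at this
  exact od_coeff_ne P h (by simpa using this)

/-- The transform of `P` under `y = x^k (t + z)`, divided by `x^(k * od P)`. -/
lemma exists_blow (k : ℕ) (hk : 1 ≤ k) (t : ℝ) (P : Polynomial (Polynomial ℝ))
    (hW : Wt k P) :
    ∃ P' : Polynomial (Polynomial ℝ),
      (∀ x z, ev P x (x ^ k * (t + z)) = x ^ (k * od P) * ev P' x z) ∧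
      P'.coeff 0 = (edge k P).comp (Polynomial.X + Polynomial.C t) := by
  obtain ⟨M, hM⟩ := exists_bound P
  refine ⟨∑ i ∈ Finset.range M, ∑ j ∈ Finset.range M,
    Polynomial.C (Polynomial.C (cf P i j) * (Polynomial.X + Polynomial.C t) ^ j) *
      Polynomial.X ^ (i + k * j - k * od P), ?_, ?_⟩
  · intro x z
    rw [ev_eq_sum P M hM]
    simp only [ev, Polynomial.evalEval_finsetSum, Polynomial.evalEval_mul, Polynomial.evalEval_pow,
      Polynomial.evalEval_C, Polynomial.evalEval_X, Polynomial.eval_mul, Polynomial.eval_pow,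
      Polynomial.eval_add, Polynomial.eval_X, Polynomial.eval_C, Finset.mul_sum]
    refine Finset.sum_congr rfl fun i _ => Finset.sum_congr rfl fun j _ => ?_
    by_cases h : cf P i j = 0
    · simp [h]
    · have h1 := hW i j h
      obtain ⟨e, he⟩ := Nat.exists_eq_add_of_le h1
      have : i + k * j - k * od P = e := by omega
      rw [this, mul_pow, ← pow_mul]
      have h2 : x ^ i * x ^ (k * j) = x ^ (k * od P) * x ^ e := by
        rw [← pow_add, ← pow_add, he]
      calc _ = cf P i j * (t + z) ^ j * (x ^ i * x ^ (k * j)) := by ring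
        _ = _ := by rw [h2]; ring
  · have hMb : ∀ i j, M ≤ i ∨ M ≤ j → cf P i j = 0 := by
      intro i j h
      by_contra h'
      have := hM i j h'
      omega
    have h1 : edge k P = ∑ j ∈ Finset.range M, Polynomial.C (edge k P |>.coeff j) * Polynomial.X ^ j := by
      ext n
      simp only [Polynomial.finsetSum_coeff, Polynomial.coeff_C_mul_X_pow]
      rw [Finset.sum_ite_eq]
      split_ifs with h
      · rfl
      · rw [edge_coeff]
        split_ifs
        · exact hMb _ _ (by simp at h; omega)
        · rfl
    rw [h1, Finset.sum_comm]
    simp only [Polynomial.finsetSum_coeff, Polynomial.coeff_C_mul, Polynomial.coeff_X_pow]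
    rw [Polynomial.sum_comp]
    refine Finset.sum_congr rfl fun j _ => ?_
    simp only [Polynomial.mul_comp, Polynomial.C_comp, Polynomial.pow_comp, Polynomial.X_comp]
    have h2 : ∀ i ∈ Finset.range M, (Polynomial.C (cf P i j) * (Polynomial.X + Polynomial.C t) ^ j *
        if 0 = i + k * j - k * od P then 1 else 0) =
        if i = k * (od P - j) then Polynomial.C ((edge k P).coeff j) * (Polynomial.X + Polynomial.C t) ^ j else 0 := by
      intro i _
      by_cases h : cf P i j = 0
      · rw [h]
        simp only [map_zero, zero_mul]
        split_ifs with h3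
        · rw [edge_coeff]
          split_ifs
          · rw [← h3, h]; simp
          · simp
        · rfl
      · have h3 := hW i j h
        by_cases h4 : i + k * j = k * od P
        · have h5 : j ≤ od P := by
            by_contra h6
            have : k * (od P + 1) ≤ k * j := Nat.mul_le_mul_left k (by omega)
            rw [mul_add] at this
            omega
          have h6 : i = k * (od P - j) := by
            rw [Nat.mul_sub]; omega
          rw [if_pos (by omega), if_pos h6, edge_coeff, if_pos h5, ← h6]
          simp
        · rw [if_neg (by omega)]
          split_ifs with h7
          · rw [edge_coeff]
            split_ifs with h8
            · exfalso
              apply h4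
              rw [h7, ← mul_add]; congr 1; omega
            · simp
          · simp
    rw [Finset.sum_congr rfl h2, Finset.sum_ite_eq']
    split_ifs with h
    · rfl
    · rw [edge_coeff]
      split_ifs
      · rw [hMb _ _ (by simp at h; omega)]; simp
      · simp

lemma natDegree_shift (E : Polynomial ℝ) (t : ℝ) :
    (E.comp (Polynomial.X + Polynomial.C t)).natDegree = E.natDegree := by
  rw [Polynomial.natDegree_comp, Polynomial.natDegree_X_add_C, mul_one]

lemma shift_ne_zero (E : Polynomial ℝ) (t : ℝ) (h : E ≠ 0) :
    E.comp (Polynomial.X + Polynomial.C t) ≠ 0 := by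
  intro h0
  apply h
  have : (E.comp (Polynomial.X + Polynomial.C t)).comp (Polynomial.X - Polynomial.C t) = 0 := by
    rw [h0]; simp
  rw [Polynomial.comp_assoc] at this
  simpa using this

/-- If the shifted edge polynomial has full order at zero, then its
subleading coefficient is nonzero unless it is a monomial. -/
lemma edge_full (E : Polynomial ℝ) (t : ℝ) (b : ℕ) (hE : E.natDegree = b) (h0 : E ≠ 0)
    (hb : (E.comp (Polynomial.X + Polynomial.C t)).natTrailingDegree = b)
    (j : ℕ) (hj : j < b) (hEj : E.coeff j ≠ 0) : E.coeff (b - 1) ≠ 0 := by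
  set T := E.comp (Polynomial.X + Polynomial.C t) with hT
  have hTd : T.natDegree = b := by rw [hT, natDegree_shift, hE]
  have hT0 : T ≠ 0 := shift_ne_zero E t h0
  have hTm : T = Polynomial.C T.leadingCoeff * Polynomial.X ^ b := by
    ext n
    rw [Polynomial.coeff_C_mul_X_pow]
    split_ifs with h
    · rw [h, Polynomial.leadingCoeff, hTd]
    · rcases lt_or_gt_of_ne h with h | h
      · exact Polynomial.coeff_eq_zero_of_lt_natTrailingDegree (by omega)
      · exact Polynomial.coeff_eq_zero_of_natDegree_lt (by omega)
  have hE2 : E = T.comp (Polynomial.X - Polynomial.C t) := by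
    rw [hT, Polynomial.comp_assoc]; simp
  have hE3 : E = Polynomial.C T.leadingCoeff * (Polynomial.X + Polynomial.C (-t)) ^ b := by
    rw [hE2]
    conv_lhs => rw [hTm]
    simp [sub_eq_add_neg]
  have hl : T.leadingCoeff ≠ 0 := by simpa using hT0
  have ht : t ≠ 0 := by
    rintro rfl
    apply hEj
    rw [hE3]
    simp [Polynomial.coeff_X_pow]
    omega
  rw [hE3, Polynomial.coeff_C_mul, Polynomial.coeff_X_add_C_pow]
  refine mul_ne_zero hl (mul_ne_zero (pow_ne_zero _ (neg_ne_zero.2 ht)) ?_)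
  exact_mod_cast Nat.ne_of_gt (Nat.choose_pos (by omega))

/-- Substituting `x = u^m`. -/
lemma exists_expand (m : ℕ) (hm : 1 ≤ m) (P : Polynomial (Polynomial ℝ)) :
    ∃ P' : Polynomial (Polynomial ℝ), (∀ x y, ev P' x y = ev P (x ^ m) y) ∧
      P'.coeff 0 = P.coeff 0 ∧ (∀ i j, cf P' (m * i) j = cf P i j) ∧
      (∀ i j, cf P' i j ≠ 0 → m ∣ i) := by
  refine ⟨Polynomial.expand _ m P, ?_, ?_, ?_, ?_⟩
  · intro x y
    simp [ev, Polynomial.evalEval, Polynomial.expand_eval]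
  · rw [Polynomial.coeff_expand (by omega)]; simp
  · intro i j
    rw [cf, Polynomial.coeff_expand_mul' (by omega)]; rfl
  · intro i j h
    by_contra h'
    apply h
    rw [cf, Polynomial.coeff_expand (by omega), if_neg h']; simp

open Asymptotics

/-- Evaluation of a finite real Puiseux polynomial. -/
noncomputable def Fev (F : ℚ →₀ ℝ) (s : ℝ) : ℝ := F.sum fun e a => a * s ^ (e : ℝ)

/-- There is a Puiseux polynomial with positive exponents along which
`x^β Q` is negligible with respect to `x^α P`. -/
def Concl (α β : ℕ) (P Q : Polynomial (Polynomial ℝ)) : Prop :=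
  ∃ F : ℚ →₀ ℝ, (∀ e ∈ F.support, 0 < e) ∧
    (fun s : ℝ => s ^ β * ev Q s (Fev F s)) =o[𝓝[>] 0] fun s : ℝ => s ^ α * ev P s (Fev F s)

lemma Fev_tendsto (F : ℚ →₀ ℝ) (hF : ∀ e ∈ F.support, 0 < e) :
    Tendsto (Fev F) (𝓝[>] 0) (𝓝 0) := by
  have : Tendsto (fun s => ∑ e ∈ F.support, F e * s ^ (e : ℝ)) (𝓝[>] 0)
      (𝓝 (∑ e ∈ F.support, F e * (0 : ℝ))) := by
    refine tendsto_finsetSum _ fun e he => Tendsto.const_mul _ ?_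
    have he' : (0 : ℝ) < e := by exact_mod_cast hF e he
    have h := (Real.continuous_rpow_const he'.le).tendsto (0 : ℝ)
    rw [Real.zero_rpow he'.ne'] at h
    exact h.mono_left nhdsWithin_le_nhds
  simp only [mul_zero, Finset.sum_const_zero] at this
  exact this

lemma Concl.cancel {α β : ℕ} {P Q : Polynomial (Polynomial ℝ)} (h : Concl α β P Q) :
    Concl (α + 1) (β + 1) P Q := by
  obtain ⟨F, hF, h⟩ := h
  refine ⟨F, hF, ?_⟩
  have := (isBigO_refl (fun s : ℝ => s) (𝓝[>] 0)).mul_isLittleO h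
  refine this.congr ?_ ?_ <;> intro s <;> ring

lemma tendsto_root (m : ℕ) (hm : 1 ≤ m) :
    Tendsto (fun s : ℝ => s ^ ((m : ℝ)⁻¹)) (𝓝[>] 0) (𝓝[>] 0) := by
  have hm' : (0 : ℝ) < (m : ℝ)⁻¹ := by positivity
  rw [tendsto_nhdsWithin_iff]
  constructor
  · have h := (Real.continuous_rpow_const hm'.le).tendsto (0 : ℝ)
    rw [Real.zero_rpow hm'.ne'] at h
    exact h.mono_left nhdsWithin_le_nhds
  · filter_upwards [self_mem_nhdsWithin] with s hs
    exact Real.rpow_pos_of_pos hs _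

lemma Concl.expand {α β : ℕ} {P Q P' Q' : Polynomial (Polynomial ℝ)} (m : ℕ) (hm : 1 ≤ m)
    (hP : ∀ x y, ev P' x y = ev P (x ^ m) y) (hQ : ∀ x y, ev Q' x y = ev Q (x ^ m) y)
    (h : Concl (m * α) (m * β) P' Q') : Concl α β P Q := by
  obtain ⟨F, hF, h⟩ := h
  have hm' : (0 : ℚ) < (m : ℚ)⁻¹ := by positivity
  refine ⟨F.mapDomain (fun e => e * (m : ℚ)⁻¹), ?_, ?_⟩
  · intro e he
    have := Finsupp.mapDomain_support he
    simp only [Finset.mem_image] at this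
    obtain ⟨a, ha, rfl⟩ := this
    exact mul_pos (hF a ha) hm'
  · have h2 := h.comp_tendsto (tendsto_root m hm)
    have key : ∀ s : ℝ, 0 < s → Fev (F.mapDomain (fun e => e * (m : ℚ)⁻¹)) s
        = Fev F (s ^ ((m : ℝ)⁻¹)) := by
      intro s hs
      rw [Fev, Fev, Finsupp.sum_mapDomain_index (by simp) (by intros; ring)]
      refine Finsupp.sum_congr fun e _ => ?_
      rw [← Real.rpow_mul hs.le]
      push_cast
      rw [mul_comm (e : ℝ)]
    have key2 : ∀ s : ℝ, 0 < s → (s ^ ((m : ℝ)⁻¹)) ^ m = s := by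
      intro s hs
      exact Real.rpow_inv_natCast_pow hs.le (by omega)
    refine h2.congr' ?_ ?_
    · filter_upwards [self_mem_nhdsWithin] with s hs
      simp only [Function.comp]
      rw [hQ, pow_mul, key2 s hs, key s hs]
    · filter_upwards [self_mem_nhdsWithin] with s hs
      simp only [Function.comp]
      rw [hP, pow_mul, key2 s hs, key s hs]

lemma Fev_blow (F : ℚ →₀ ℝ) (k : ℕ) (t s : ℝ) (hs : 0 < s) :
    Fev (Finsupp.single (k : ℚ) t + F.mapDomain (fun e => (k : ℚ) + e)) s = s ^ k * (t + Fev F s) := by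
  rw [Fev, Finsupp.sum_add_index' (by simp) (by intros; ring), Finsupp.sum_single_index (by simp),
    Finsupp.sum_mapDomain_index (by simp) (by intros; ring), mul_add]
  congr 1
  · push_cast
    rw [Real.rpow_natCast]; ring
  · rw [Fev, Finsupp.mul_sum]
    refine Finsupp.sum_congr fun e _ => ?_
    push_cast
    rw [Real.rpow_add hs, Real.rpow_natCast]; ring

lemma support_blow (F : ℚ →₀ ℝ) (hF : ∀ e ∈ F.support, 0 < e) (k : ℕ) (t : ℝ) (e : ℚ)
    (he : e ∈ (Finsupp.single (k : ℚ) t + F.mapDomain (fun e => (k : ℚ) + e)).support) :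
    (k : ℚ) ≤ e := by
  classical
  have := Finsupp.support_add he
  rw [Finset.mem_union] at this
  rcases this with h | h
  · have := Finsupp.support_single_subset h
    simp at this
    exact this.ge
  · have := Finsupp.mapDomain_support h
    simp only [Finset.mem_image] at this
    obtain ⟨a, ha, rfl⟩ := this
    have := hF a ha
    linarith

lemma Concl.blow {α β a b : ℕ} {P Q P' Q' : Polynomial (Polynomial ℝ)} (k : ℕ) (hk : 1 ≤ k) (t : ℝ)
    (hP : ∀ x z, ev P x (x ^ k * (t + z)) = x ^ a * ev P' x z)
    (hQ : ∀ x z, ev Q x (x ^ k * (t + z)) = x ^ b * ev Q' x z)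
    (h : Concl (α + a) (β + b) P' Q') : Concl α β P Q := by
  obtain ⟨F, hF, h⟩ := h
  refine ⟨_, fun e he => lt_of_lt_of_le ?_ (support_blow F hF k t e he), ?_⟩
  · exact_mod_cast hk
  · refine h.congr' ?_ ?_
    · filter_upwards [self_mem_nhdsWithin] with s hs
      rw [Fev_blow F k t s hs, hQ]; ring
    · filter_upwards [self_mem_nhdsWithin] with s hs
      rw [Fev_blow F k t s hs, hP]; ring

lemma ev_theta {ι : Type*} {l : Filter ι} (k : ℕ) (_hk : 1 ≤ k) (P : Polynomial (Polynomial ℝ))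
    (hW : Wt k P) (h0 : P.coeff 0 ≠ 0) {u y : ι → ℝ} (hu : Tendsto u l (𝓝 0))
    (hy : Tendsto y l (𝓝 0)) (huy : (fun n => u n ^ k) =o[l] y) :
    (fun n => ev P (u n) (y n)) =Θ[l] fun n => y n ^ od P := by
  obtain ⟨M, hM⟩ := exists_bound P
  set b := od P with hb
  have hc := od_coeff_ne P h0
  rw [← hb] at hc
  have hb1 := hM _ _ hc
  have hterm : ∀ i ∈ Finset.range M, ∀ j ∈ Finset.range M,
      (fun n => cf P i j * (u n ^ i * y n ^ j) -
        if i = 0 then (if j = b then cf P 0 b * y n ^ b else 0) else 0) =o[l] fun n => y n ^ b := by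
    intro i _ j _
    by_cases hij : i = 0 ∧ j = b
    · obtain ⟨rfl, rfl⟩ := hij
      simp
    have e1 : ∀ n, (if i = 0 then (if j = b then cf P 0 b * y n ^ b else 0) else 0) = 0 := by
      intro n
      split_ifs <;> tauto
    simp only [e1, sub_zero]
    by_cases hz : cf P i j = 0
    · simp [hz]
    apply IsLittleO.const_mul_left
    rcases le_or_gt b j with hj | hj
    · have h1 : (fun n => u n ^ i * y n ^ (j - b)) =o[l] fun _ => (1 : ℝ) := by
        rw [isLittleO_one_iff]
        have h2 := (hu.pow i).mul (hy.pow (j - b))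
        convert h2 using 2
        by_cases hi : i = 0
        · have : j - b ≠ 0 := by have := hij; omega
          simp [this]
        · simp [hi]
      have h3 := h1.mul_isBigO (isBigO_refl (fun n => y n ^ b) l)
      refine h3.congr ?_ ?_
      · intro n
        rw [mul_assoc, ← pow_add, Nat.sub_add_cancel hj]
      · intro n; simp
    · have h1 := hW i j hz
      rw [← hb] at h1
      obtain ⟨e, he⟩ : ∃ e, i = k * (b - j) + e := by
        refine Nat.exists_eq_add_of_le ?_
        rw [Nat.mul_sub]; omega
      have h2 : (fun n => (u n ^ k) ^ (b - j)) =o[l] fun n => y n ^ (b - j) :=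
        huy.pow (by omega)
      have h3 : (fun n => u n ^ e * y n ^ j) =O[l] fun n => y n ^ j := by
        have : (fun n => u n ^ e) =O[l] fun _ => (1 : ℝ) := (hu.pow e).isBigO_one ℝ
        simpa using this.mul (isBigO_refl (fun n => y n ^ j) l)
      refine (h2.mul_isBigO h3).congr ?_ ?_
      · intro n
        rw [he, pow_add, pow_mul]; ring
      · intro n
        rw [← pow_add, Nat.sub_add_cancel hj.le]
  have hsum : (fun n => ev P (u n) (y n) - cf P 0 b * y n ^ b) =o[l] fun n => y n ^ b := by
    have h1 := IsLittleO.sum fun i hi => IsLittleO.sum fun j hj => hterm i hi j hj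
    refine h1.congr_left ?_
    intro n
    simp only [Finset.sum_apply, Finset.sum_sub_distrib]
    rw [ev_eq_sum P M hM]
    congr 1
    have : 0 < M := by omega
    rw [Finset.sum_eq_single 0]
    · simp [hb1.2]
    · intro i _ hi; simp [hi]
    · intro h; simp at h; omega
  have h4 : (fun n => ev P (u n) (y n)) ~[l] fun n => cf P 0 b * y n ^ b := by
    refine hsum.trans_isBigO ?_
    exact isBigO_self_const_mul hc _ _
  exact h4.isTheta.trans ((isTheta_refl _ _).const_mul_left hc)

lemma ultra_dichotomy {ι : Type*} (U : Ultrafilter ι) (w : ι → ℝ) :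
    (∃ t, Tendsto w U (𝓝 t)) ∨ Tendsto (fun n => |w n|) U atTop := by
  by_cases h : ∃ M : ℝ, ∀ᶠ n in (U : Filter ι), |w n| ≤ M
  · left
    obtain ⟨M, hM⟩ := h
    have hc : IsCompact (Set.Icc (-M) M) := isCompact_Icc
    obtain ⟨t, _, ht⟩ := hc.ultrafilter_le_nhds (U.map w) (by
      rw [le_principal_iff]
      simp only [Ultrafilter.coe_map, Filter.mem_map]
      filter_upwards [hM] with n hn
      exact abs_le.1 hn)
    exact ⟨t, ht⟩
  · right
    push Not at h
    rw [tendsto_atTop]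
    intro M
    filter_upwards [h M] with n hn
    exact hn.le

/-- The case where `y` dominates `u^k`. -/
lemma mono_case {ι : Type*} {l : Filter ι} [l.NeBot] (k : ℕ) (hk : 1 ≤ k) (α β : ℕ)
    (P Q : Polynomial (Polynomial ℝ)) (hWP : Wt k P) (hWQ : Wt k Q)
    (hP0 : P.coeff 0 ≠ 0) (hQ0 : Q.coeff 0 ≠ 0) {u y : ι → ℝ} (hu : Tendsto u l (𝓝 0))
    (hu0 : ∀ᶠ n in l, 0 < u n)
    (hy : Tendsto y l (𝓝 0)) (huy : (fun n => u n ^ k) =o[l] y)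
    (h : (fun n => u n ^ β * ev Q (u n) (y n)) =o[l] fun n => u n ^ α * ev P (u n) (y n)) :
    Concl α β P Q := by
  have hP := ev_theta k hk P hWP hP0 hu hy huy
  have hQ := ev_theta k hk Q hWQ hQ0 hu hy huy
  set b := od P with hb
  set b' := od Q with hb'
  have h1 : (fun n => u n ^ β * y n ^ b') =o[l] fun n => u n ^ α * y n ^ b :=
    (((isTheta_refl (fun n => u n ^ β) l).mul hQ).symm.trans_isLittleO h).trans_isTheta
      ((isTheta_refl (fun n => u n ^ α) l).mul hP)
  have hor : α < β ∨ α + k * b < β + k * b' := by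
    by_contra hcon
    push Not at hcon
    obtain ⟨hc1, hc2⟩ := hcon
    have hle : ∀ᶠ n in l, u n ^ k ≤ |y n| := by
      filter_upwards [huy.bound one_pos, hu0] with n hn hn0
      simp only [norm_pow, Real.norm_eq_abs, one_mul, abs_of_pos hn0] at hn
      exact hn
    have hu1 : ∀ᶠ n in l, u n < 1 := hu.eventually (gt_mem_nhds one_pos)
    have hy1 : ∀ᶠ n in l, |y n| < 1 := by
      have := hy.abs
      rw [abs_zero] at this
      exact this.eventually (gt_mem_nhds one_pos)
    have hhalf := h1.bound (c := 1 / 2) (by norm_num)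
    have hF : ∀ᶠ n in l, False := by
      filter_upwards [hle, hu1, hy1, hhalf, hu0] with n h2 h3 h4 h5 h6
      have h7 : 0 < |y n| := lt_of_lt_of_le (pow_pos h6 k) h2
      simp only [norm_mul, norm_pow, Real.norm_eq_abs, abs_of_pos h6] at h5
      have h8 : u n ^ α * |y n| ^ b ≤ u n ^ β * |y n| ^ b' := by
        rcases le_or_gt b' b with hbb | hbb
        · exact mul_le_mul (pow_le_pow_of_le_one h6.le h3.le hc1)
            (pow_le_pow_of_le_one h7.le h4.le hbb) (by positivity) (by positivity)
        · obtain ⟨D, hD⟩ := Nat.exists_eq_add_of_le hbb.le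
          have h9 : β + k * D ≤ α := by
            rw [hD, mul_add] at hc2; omega
          calc u n ^ α * |y n| ^ b ≤ u n ^ (β + k * D) * |y n| ^ b := by
                gcongr ?_ * _
                exact pow_le_pow_of_le_one h6.le h3.le h9
            _ = u n ^ β * (u n ^ k) ^ D * |y n| ^ b := by rw [pow_add, pow_mul]
            _ ≤ u n ^ β * |y n| ^ D * |y n| ^ b := by gcongr
            _ = _ := by rw [hD, pow_add]; ring
      have h10 : 0 < u n ^ α * |y n| ^ b := by positivity
      linarith
    exact hF.exists.elim fun _ h => h
  -- choose the exponent
  have hk' : (1 : ℚ) ≤ k := by exact_mod_cast hk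
  obtain ⟨σ, hσ0, hσk, hσ⟩ : ∃ σ : ℚ, 0 < σ ∧ σ < k ∧ (α : ℚ) + σ * b < β + σ * b' := by
    rcases hor with h | h
    · have h' : (α : ℚ) + 1 ≤ β := by exact_mod_cast h
      have hpos : (0 : ℚ) < (b : ℚ) + 2 := by positivity
      refine ⟨1 / ((b : ℚ) + 2), by positivity, ?_, ?_⟩
      · refine lt_of_lt_of_le ?_ hk'
        rw [div_lt_one hpos]
        have : (0 : ℚ) ≤ b := by positivity
        linarith
      · have h2 : 1 / ((b : ℚ) + 2) * b < 1 := by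
          rw [one_div, inv_mul_lt_one₀ hpos]; linarith
        have h3 : 0 ≤ 1 / ((b : ℚ) + 2) * b' := by positivity
        linarith
    · have h' : (α : ℚ) + k * b + 1 ≤ β + k * b' := by exact_mod_cast h
      have hpos : (0 : ℚ) < (b' : ℚ) + 2 := by positivity
      have hlt : 1 / ((b' : ℚ) + 2) < 1 := by
        rw [div_lt_one hpos]
        have : (0 : ℚ) ≤ b' := by positivity
        linarith
      have hp : 0 < 1 / ((b' : ℚ) + 2) := by positivity
      refine ⟨k - 1 / ((b' : ℚ) + 2), by linarith, by linarith, ?_⟩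
      have h2 : 1 / ((b' : ℚ) + 2) * b' < 1 := by
        rw [one_div, inv_mul_lt_one₀ hpos]; linarith
      have h3 : 0 ≤ 1 / ((b' : ℚ) + 2) * b := by positivity
      rw [sub_mul, sub_mul]
      linarith
  have hF : ∀ s : ℝ, Fev (Finsupp.single σ 1) s = s ^ (σ : ℝ) := by
    intro s
    rw [Fev, Finsupp.sum_single_index (by simp), one_mul]
  have hFs : ∀ e ∈ (Finsupp.single σ (1 : ℝ)).support, 0 < e := by
    intro e he
    have := Finsupp.support_single_subset he
    simp at this
    rw [this]; exact hσ0
  have hlit : ∀ a c : ℝ, c < a → (fun s : ℝ => s ^ a) =o[𝓝[>] 0] fun s : ℝ => s ^ c := by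
    intro a c hac
    have h1 : (fun s : ℝ => s ^ (a - c)) =o[𝓝[>] 0] fun _ => (1 : ℝ) := by
      rw [isLittleO_one_iff]
      have hpos : 0 < a - c := by linarith
      have h := (Real.continuous_rpow_const hpos.le).tendsto (0 : ℝ)
      rw [Real.zero_rpow hpos.ne'] at h
      exact h.mono_left nhdsWithin_le_nhds
    refine (h1.mul_isBigO (isBigO_refl (fun s : ℝ => s ^ c) _)).congr' ?_ ?_
    · filter_upwards [self_mem_nhdsWithin] with s hs
      rw [← Real.rpow_add hs]; simp
    · filter_upwards with s; simp
  refine ⟨Finsupp.single σ 1, hFs, ?_⟩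
  have hid : Tendsto (fun s : ℝ => s) (𝓝[>] 0) (𝓝 0) := tendsto_id.mono_left nhdsWithin_le_nhds
  have hyt : Tendsto (fun s : ℝ => Fev (Finsupp.single σ 1) s) (𝓝[>] 0) (𝓝 0) := Fev_tendsto _ hFs
  have hso : (fun s : ℝ => s ^ k) =o[𝓝[>] 0] fun s : ℝ => Fev (Finsupp.single σ 1) s := by
    simp only [hF]
    have := hlit (k : ℝ) (σ : ℝ) (by exact_mod_cast hσk)
    simpa using this
  have hP' := ev_theta k hk P hWP hP0 hid hyt hso
  have hQ' := ev_theta k hk Q hWQ hQ0 hid hyt hso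
  rw [← hb] at hP'
  rw [← hb'] at hQ'
  refine (((isTheta_refl (fun s : ℝ => s ^ β) _).mul hQ').trans_isLittleO ?_).trans_isTheta
      ((isTheta_refl (fun s : ℝ => s ^ α) _).mul hP').symm
  refine (hlit (β + σ * b') (α + σ * b) (by exact_mod_cast hσ)).congr' ?_ ?_
  · filter_upwards [self_mem_nhdsWithin] with s hs
    rw [hF, Real.rpow_add hs, Real.rpow_mul (le_of_lt hs), Real.rpow_natCast, Real.rpow_natCast]
  · filter_upwards [self_mem_nhdsWithin] with s hs
    rw [hF, Real.rpow_add hs, Real.rpow_mul (le_of_lt hs), Real.rpow_natCast, Real.rpow_natCast]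

/-- The hypotheses carried through the induction. -/
structure St {ι : Type*} (U : Ultrafilter ι) (α β N : ℕ) (P Q : Polynomial (Polynomial ℝ))
    (x y : ι → ℝ) : Prop where
  P0 : P.coeff 0 ≠ 0
  Q0 : Q.coeff 0 ≠ 0
  hx : Tendsto x U (𝓝 0)
  hpos : ∀ᶠ n in (U : Filter ι), 0 < x n
  hy : Tendsto y U (𝓝 0)
  hN : (fun n => x n ^ N) =O[(U : Filter ι)] fun n => x n ^ α * ev P (x n) (y n)
  ho : (fun n => x n ^ β * ev Q (x n) (y n)) =o[(U : Filter ι)] fun n => x n ^ α * ev P (x n) (y n)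

section
variable {ι : Type*} {U : Ultrafilter ι} {α β N : ℕ} {P Q : Polynomial (Polynomial ℝ)}
  {x y : ι → ℝ}

lemma cancel_isBigO {l : Filter ι} {f g x : ι → ℝ} (hx : ∀ᶠ n in l, 0 < x n)
    (h : (fun n => x n * f n) =O[l] fun n => x n * g n) : f =O[l] g := by
  have h2 := (isBigO_refl (fun n => (x n)⁻¹) l).mul h
  refine h2.congr' ?_ ?_ <;> filter_upwards [hx] with n hn <;> field_simp

lemma cancel_isLittleO {l : Filter ι} {f g x : ι → ℝ} (hx : ∀ᶠ n in l, 0 < x n)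
    (h : (fun n => x n * f n) =o[l] fun n => x n * g n) : f =o[l] g := by
  have h2 := (isBigO_refl (fun n => (x n)⁻¹) l).mul_isLittleO h
  refine h2.congr' ?_ ?_ <;> filter_upwards [hx] with n hn <;> field_simp

lemma St.cancel (h : St U (α + 1) (β + 1) N P Q x y) : ∃ N', N = N' + 1 ∧ St U α β N' P Q x y := by
  rcases N with _ | N'
  · exfalso
    have h1 := h.hN
    have h2 : (fun n => x n ^ (α + 1) * ev P (x n) (y n)) =o[(U : Filter ι)] fun _ => (1 : ℝ) := by
      rw [isLittleO_one_iff]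
      have := (h.hx.pow (α + 1)).mul (ev_tendsto P h.hx h.hy)
      simpa using this
    have h3 := h1.trans_isLittleO h2
    simp only [pow_zero] at h3
    rw [isLittleO_one_iff] at h3
    have := tendsto_nhds_unique h3 tendsto_const_nhds
    norm_num at this
  · refine ⟨N', rfl, h.P0, h.Q0, h.hx, h.hpos, h.hy, ?_, ?_⟩
    · apply cancel_isBigO h.hpos
      refine h.hN.congr ?_ ?_ <;> intro n <;> ring
    · apply cancel_isLittleO h.hpos
      refine h.ho.congr ?_ ?_ <;> intro n <;> ring

lemma St.exc1 (h : St U 0 β N P Q x y) (hb : od P = 0) (hp : 1 ≤ β + od Q) : Concl 0 β P Q := by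
  refine ⟨0, by simp, ?_⟩
  have hF : ∀ s, Fev 0 s = 0 := by intro s; simp [Fev]
  simp only [hF]
  have hid : Tendsto (fun s : ℝ => s) (𝓝[>] 0) (𝓝 0) := tendsto_id.mono_left nhdsWithin_le_nhds
  have hc : Tendsto (fun _ : ℝ => (0 : ℝ)) (𝓝[>] 0) (𝓝 0) := tendsto_const_nhds
  have hP := ev_tendsto P hid hc
  have hQ := ev_tendsto Q hid hc
  have hP0 := od_coeff_ne P h.P0
  rw [hb] at hP0
  have h1 : (fun s : ℝ => s ^ β * ev Q s 0) =o[𝓝[>] 0] fun _ => (1 : ℝ) := by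
    rw [isLittleO_one_iff]
    have := (hid.pow β).mul hQ
    convert this using 2
    by_cases hβ : β = 0
    · have : cf Q 0 0 = 0 := od_coeff_lt Q (by omega)
      simp [this]
    · simp [hβ]
  refine h1.trans_isBigO ?_
  have h2 : (fun s : ℝ => ev P s 0) ~[𝓝[>] 0] fun _ => cf P 0 0 :=
    (isEquivalent_const_iff_tendsto hP0).2 hP
  have h3 := h2.isTheta.isBigO_symm
  simp only [pow_zero, one_mul]
  refine (isBigO_const_const (1 : ℝ) hP0 _).trans h3

lemma St.exc2 (h : St U α 0 N P Q x y) (hb : od Q = 0) : False := by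
  have hQ0 := od_coeff_ne Q h.Q0
  rw [hb] at hQ0
  have hQ := ev_tendsto Q h.hx h.hy
  have h1 : (fun n => x n ^ α * ev P (x n) (y n)) =O[(U : Filter ι)] fun _ => (1 : ℝ) :=
    ((h.hx.pow α).mul (ev_tendsto P h.hx h.hy)).isBigO_one ℝ
  have h2 := h.ho.trans_isBigO h1
  rw [isLittleO_one_iff] at h2
  simp only [pow_zero, one_mul] at h2
  exact hQ0 (tendsto_nhds_unique hQ h2)

lemma St.blow (h : St U α β N P Q x y) (k : ℕ) (hk : 1 ≤ k) (t : ℝ)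
    (hWP : Wt k P) (hWQ : Wt k Q)
    (ht : Tendsto (fun n => y n / x n ^ k) U (𝓝 t)) :
    ∃ P' Q' : Polynomial (Polynomial ℝ), ∃ y',
      (∀ x z, ev P x (x ^ k * (t + z)) = x ^ (k * od P) * ev P' x z) ∧
      P'.coeff 0 = (edge k P).comp (Polynomial.X + Polynomial.C t) ∧
      (∀ x z, ev Q x (x ^ k * (t + z)) = x ^ (k * od Q) * ev Q' x z) ∧
      Q'.coeff 0 = (edge k Q).comp (Polynomial.X + Polynomial.C t) ∧
      St U (α + k * od P) (β + k * od Q) N P' Q' x y' := by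
  obtain ⟨P', hP1, hP2⟩ := exists_blow k hk t P hWP
  obtain ⟨Q', hQ1, hQ2⟩ := exists_blow k hk t Q hWQ
  refine ⟨P', Q', fun n => y n / x n ^ k - t, hP1, hP2, hQ1, hQ2, ?_⟩
  have e1 : ∀ᶠ n in (U : Filter ι), y n = x n ^ k * (t + (y n / x n ^ k - t)) := by
    filter_upwards [h.hpos] with n hn
    field_simp
    ring
  have eP : ∀ᶠ n in (U : Filter ι), x n ^ α * ev P (x n) (y n) =
      x n ^ (α + k * od P) * ev P' (x n) (y n / x n ^ k - t) := by
    filter_upwards [e1] with n hn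
    conv_lhs => rw [hn, hP1]
    ring
  have eQ : ∀ᶠ n in (U : Filter ι), x n ^ β * ev Q (x n) (y n) =
      x n ^ (β + k * od Q) * ev Q' (x n) (y n / x n ^ k - t) := by
    filter_upwards [e1] with n hn
    conv_lhs => rw [hn, hQ1]
    ring
  refine ⟨?_, ?_, h.hx, h.hpos, ?_, ?_, ?_⟩
  · rw [hP2]; exact shift_ne_zero _ _ (edge_ne_zero k P h.P0)
  · rw [hQ2]; exact shift_ne_zero _ _ (edge_ne_zero k Q h.Q0)
  · simpa using ht.sub_const t
  · exact h.hN.congr' EventuallyEq.rfl eP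
  · exact h.ho.congr' eQ eP

lemma blow_od {k : ℕ} {t : ℝ} {P' : Polynomial (Polynomial ℝ)} (h0 : P.coeff 0 ≠ 0)
    (h : P'.coeff 0 = (edge k P).comp (Polynomial.X + Polynomial.C t)) : od P' ≤ od P := by
  have h1 : od P' ≤ (P'.coeff 0).natDegree := Polynomial.natTrailingDegree_le_natDegree _
  rw [h, natDegree_shift, edge_natDegree k P h0] at h1
  exact h1

lemma St.step (h : St U α β N P Q x y) (k : ℕ) (hk : 1 ≤ k)
    (hWP : Wt k P) (hWQ : Wt k Q) : Concl α β P Q ∨ ∃ t : ℝ,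
    Tendsto (fun n => y n / x n ^ k) U (𝓝 t) := by
  rcases ultra_dichotomy U (fun n => y n / x n ^ k) with ht | ht
  · exact Or.inr ht
  · left
    refine mono_case k hk α β P Q hWP hWQ h.P0 h.Q0 h.hx h.hpos h.hy ?_ h.ho
    have h1 : (fun n => (1 : ℝ)) =o[(U : Filter ι)] fun n => y n / x n ^ k := by
      rw [isLittleO_const_left]
      exact Or.inr ht
    have h2 := (isBigO_refl (fun n => x n ^ k) (U : Filter ι)).mul_isLittleO h1
    refine h2.congr' ?_ ?_
    · filter_upwards with n; simp
    · filter_upwards [h.hpos] with n hn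
      field_simp

lemma St.expand (h : St U α β N P Q x y) (m : ℕ) (hm : 1 ≤ m) {P' Q' : Polynomial (Polynomial ℝ)}
    (hP : ∀ x y, ev P' x y = ev P (x ^ m) y) (hQ : ∀ x y, ev Q' x y = ev Q (x ^ m) y)
    (hP0 : P'.coeff 0 = P.coeff 0) (hQ0 : Q'.coeff 0 = Q.coeff 0) :
    St U (m * α) (m * β) (m * N) P' Q' (fun n => x n ^ ((m : ℝ)⁻¹)) y := by
  have hx' : Tendsto x U (𝓝[>] 0) := tendsto_nhdsWithin_iff.2 ⟨h.hx, h.hpos⟩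
  have hr := (tendsto_root m hm).comp hx'
  rw [tendsto_nhdsWithin_iff] at hr
  have key2 : ∀ᶠ n in (U : Filter ι), (x n ^ ((m : ℝ)⁻¹)) ^ m = x n := by
    filter_upwards [h.hpos] with n hn
    exact Real.rpow_inv_natCast_pow hn.le (by omega)
  have eP : ∀ᶠ n in (U : Filter ι), x n ^ α * ev P (x n) (y n) =
      (x n ^ ((m : ℝ)⁻¹)) ^ (m * α) * ev P' (x n ^ ((m : ℝ)⁻¹)) (y n) := by
    filter_upwards [key2] with n hn
    rw [hP, pow_mul, hn]
  have eQ : ∀ᶠ n in (U : Filter ι), x n ^ β * ev Q (x n) (y n) =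
      (x n ^ ((m : ℝ)⁻¹)) ^ (m * β) * ev Q' (x n ^ ((m : ℝ)⁻¹)) (y n) := by
    filter_upwards [key2] with n hn
    rw [hQ, pow_mul, hn]
  refine ⟨by rw [hP0]; exact h.P0, by rw [hQ0]; exact h.Q0, hr.1, hr.2, h.hy, ?_, ?_⟩
  · refine h.hN.congr' ?_ eP
    filter_upwards [key2] with n hn
    rw [pow_mul, hn]
  · exact h.ho.congr' eQ eP

/-- An attained slope with full multiplicity forces divisibility. -/
lemma ramified_dvd {m k : ℕ} {t : ℝ} {P P' P'' : Polynomial (Polynomial ℝ)}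
    (h0 : P.coeff 0 ≠ 0) (hP0 : P'.coeff 0 = P.coeff 0)
    (hcf : ∀ i j, cf P' (m * i) j = cf P i j) (hdvd : ∀ i j, cf P' i j ≠ 0 → m ∣ i)
    (hP2 : P''.coeff 0 = (edge k P').comp (Polynomial.X + Polynomial.C t))
    (hod : od P'' = od P)
    (hatt : ∃ i j, j < od P ∧ cf P i j ≠ 0 ∧ k * (od P - j) = m * i) : m ∣ k := by
  obtain ⟨i, j, hj, hij, hkm⟩ := hatt
  have hodP' : od P' = od P := by simp [od, hP0]
  have h0' : P'.coeff 0 ≠ 0 := by rw [hP0]; exact h0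
  have h1 := edge_full (edge k P') t (od P) (by rw [edge_natDegree k P' h0', hodP'])
    (edge_ne_zero k P' h0') (by rw [← hP2]; exact hod) j hj (by
      rw [edge_coeff, hodP', if_pos hj.le, hkm, hcf]; exact hij)
  rw [edge_coeff, hodP', if_pos (by omega)] at h1
  have h2 := hdvd _ _ h1
  have h3 : od P - (od P - 1) = 1 := by omega
  rwa [h3, mul_one] at h2

lemma key_induction (U : Ultrafilter ι) : ∀ d N α β : ℕ, ∀ P Q : Polynomial (Polynomial ℝ), ∀ x y : ι → ℝ,
    od P + od Q ≤ d → St U α β N P Q x y → Concl α β P Q := by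
  intro d
  induction d using Nat.strong_induction_on with
  | _ d ihd =>
  intro N
  induction N using Nat.strong_induction_on with
  | _ N ihN =>
  intro α β P Q x y hd h
  by_cases hαβ : 1 ≤ α ∧ 1 ≤ β
  · obtain ⟨α, rfl⟩ := Nat.exists_eq_add_of_le' hαβ.1
    obtain ⟨β, rfl⟩ := Nat.exists_eq_add_of_le' hαβ.2
    obtain ⟨N', rfl, h'⟩ := h.cancel
    exact (ihN N' (by omega) α β P Q x y hd h').cancel
  by_cases he2 : β = 0 ∧ od Q = 0
  · obtain ⟨rfl, hb⟩ := he2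
    exact (h.exc2 hb).elim
  by_cases he1 : α = 0 ∧ od P = 0
  · obtain ⟨rfl, hb⟩ := he1
    exact h.exc1 hb (by omega)
  by_cases hW : Wt 1 P ∧ Wt 1 Q
  · obtain ⟨hWP, hWQ⟩ := hW
    rcases h.step 1 le_rfl hWP hWQ with hc | ⟨t, ht⟩
    · exact hc
    obtain ⟨P', Q', y', hP1, hP2, hQ1, hQ2, hS⟩ := h.blow 1 le_rfl t hWP hWQ ht
    refine Concl.blow 1 le_rfl t hP1 hQ1 ?_
    have hoP := blow_od h.P0 hP2
    have hoQ := blow_od h.Q0 hQ2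
    obtain ⟨α', hα'⟩ : ∃ α', α + 1 * od P = α' + 1 := ⟨α + od P - 1, by omega⟩
    obtain ⟨β', hβ'⟩ : ∃ β', β + 1 * od Q = β' + 1 := ⟨β + od Q - 1, by omega⟩
    rw [hα', hβ'] at hS ⊢
    obtain ⟨N', rfl, h'⟩ := hS.cancel
    exact (ihN N' (by omega) α' β' P' Q' x y' (by omega) h').cancel
  have hSpred : ∃ k i j, k < (od P + od Q).factorial ∧
      ((j < od P ∧ cf P i j ≠ 0 ∧ k * (od P - j) = (od P + od Q).factorial * i) ∨
       (j < od Q ∧ cf Q i j ≠ 0 ∧ k * (od Q - j) = (od P + od Q).factorial * i)) := by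
    have haux : ∀ b i j, b ≤ od P + od Q → i + j < b → ∃ k, k < (od P + od Q).factorial ∧
        k * (b - j) = (od P + od Q).factorial * i := by
      intro b i j hb hij
      obtain ⟨c, hc⟩ : (b - j) ∣ (od P + od Q).factorial :=
        Nat.dvd_factorial (by omega) (by omega)
      refine ⟨c * i, ?_, by rw [hc]; ring⟩
      have hcpos : 0 < c := by
        rcases Nat.eq_zero_or_pos c with h0 | h0
        · rw [h0, mul_zero] at hc
          exact absurd hc (Nat.factorial_pos _).ne'
        · exact h0
      rw [hc, mul_comm (b - j)]
      exact Nat.mul_lt_mul_of_pos_left (by omega) hcpos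
    simp only [Wt] at hW
    by_cases hWP : ∀ i j, cf P i j ≠ 0 → 1 * od P ≤ i + 1 * j
    · have hWQ : ¬ ∀ i j, cf Q i j ≠ 0 → 1 * od Q ≤ i + 1 * j := fun h => hW ⟨hWP, h⟩
      push Not at hWQ
      obtain ⟨i, j, hij, hlt⟩ := hWQ
      obtain ⟨k, hk1, hk2⟩ := haux (od Q) i j (by omega) (by omega)
      exact ⟨k, i, j, hk1, Or.inr ⟨by omega, hij, hk2⟩⟩
    · push Not at hWP
      obtain ⟨i, j, hij, hlt⟩ := hWP
      obtain ⟨k, hk1, hk2⟩ := haux (od P) i j (by omega) (by omega)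
      exact ⟨k, i, j, hk1, Or.inl ⟨by omega, hij, hk2⟩⟩
  set m := (od P + od Q).factorial with hm
  have hm1 : 1 ≤ m := Nat.factorial_pos _
  classical
  let k := Nat.find hSpred
  have hkspec : ∃ i j, k < m ∧
      ((j < od P ∧ cf P i j ≠ 0 ∧ k * (od P - j) = m * i) ∨
       (j < od Q ∧ cf Q i j ≠ 0 ∧ k * (od Q - j) = m * i)) := Nat.find_spec hSpred
  obtain ⟨i, j, hkm, hatt⟩ := hkspec
  have hkmin : ∀ k', (∃ i j, 
      ((j < od P ∧ cf P i j ≠ 0 ∧ k' * (od P - j) = m * i) ∨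
       (j < od Q ∧ cf Q i j ≠ 0 ∧ k' * (od Q - j) = m * i))) → k ≤ k' := by
    rintro k' ⟨i, j, h'⟩
    rcases lt_or_ge k' m with h1 | h1
    · exact Nat.find_min' hSpred ⟨i, j, h1, h'⟩
    · omega
  have hk1 : 1 ≤ k := by
    by_contra hk0
    have hk0' : k = 0 := by omega
    rw [hk0'] at hatt
    simp only [zero_mul] at hatt
    rcases hatt with ⟨h1, h2, h3⟩ | ⟨h1, h2, h3⟩
    · have : i = 0 := by
        rcases Nat.mul_eq_zero.1 h3.symm with h4 | h4 <;> omega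
      rw [this] at h2
      exact h2 (od_coeff_lt P h1)
    · have : i = 0 := by
        rcases Nat.mul_eq_zero.1 h3.symm with h4 | h4 <;> omega
      rw [this] at h2
      exact h2 (od_coeff_lt Q h1)
  obtain ⟨P₁, hP1, hP2, hP3, hP4⟩ := exists_expand m hm1 P
  obtain ⟨Q₁, hQ1, hQ2, hQ3, hQ4⟩ := exists_expand m hm1 Q
  have hodP : od P₁ = od P := by simp [od, hP2]
  have hodQ : od Q₁ = od Q := by simp [od, hQ2]
  have hwt : ∀ (b i j : ℕ), (j < b → ∃ k', k ≤ k' ∧ k' * (b - j) = m * i) → k * b ≤ m * i + k * j := by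
    intro b i j hh
    rcases lt_or_ge j b with hj | hj
    · obtain ⟨k', hk', he⟩ := hh hj
      have h1 : k * (b - j) ≤ m * i := by rw [← he]; exact Nat.mul_le_mul_right _ hk'
      rw [Nat.mul_sub] at h1
      omega
    · have := Nat.mul_le_mul_left k hj
      omega
  have hex : ∀ b i j, b ≤ od P + od Q → j < b → ∃ k', k' * (b - j) = m * i := by
    intro b i j hb hj
    obtain ⟨c, hc⟩ : (b - j) ∣ m := Nat.dvd_factorial (by omega) (by omega)
    exact ⟨c * i, by rw [hc]; ring⟩
  have hWP : Wt k P₁ := by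
    intro i' j hij
    obtain ⟨i, rfl⟩ := hP4 i' j hij
    rw [hP3] at hij
    rw [hodP]
    apply hwt
    intro hj
    obtain ⟨k', hk'⟩ := hex (od P) i j (by omega) hj
    exact ⟨k', hkmin k' ⟨i, j, Or.inl ⟨hj, hij, hk'⟩⟩, hk'⟩
  have hWQ : Wt k Q₁ := by
    intro i' j hij
    obtain ⟨i, rfl⟩ := hQ4 i' j hij
    rw [hQ3] at hij
    rw [hodQ]
    apply hwt
    intro hj
    obtain ⟨k', hk'⟩ := hex (od Q) i j (by omega) hj
    exact ⟨k', hkmin k' ⟨i, j, Or.inr ⟨hj, hij, hk'⟩⟩, hk'⟩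
  have hS1 := h.expand m hm1 hP1 hQ1 hP2 hQ2
  refine Concl.expand m hm1 hP1 hQ1 ?_
  rcases hS1.step k hk1 hWP hWQ with hc | ⟨t, ht⟩
  · exact hc
  obtain ⟨P', Q', y', hP1', hP2', hQ1', hQ2', hS⟩ := hS1.blow k hk1 t hWP hWQ ht
  refine Concl.blow k hk1 t hP1' hQ1' ?_
  have hoP := blow_od hS1.P0 hP2'
  have hoQ := blow_od hS1.Q0 hQ2'
  have hndvd : ¬ m ∣ k := fun hd => by
    have := Nat.le_of_dvd (by omega) hd
    omega
  have hlt : od P' + od Q' < d := by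
    rcases hatt with hatt | hatt
    · have : od P' ≠ od P := fun hh =>
        hndvd (ramified_dvd h.P0 hP2 hP3 hP4 hP2' hh ⟨i, j, hatt⟩)
      omega
    · have : od Q' ≠ od Q := fun hh =>
        hndvd (ramified_dvd h.Q0 hQ2 hQ3 hQ4 hQ2' hh ⟨i, j, hatt⟩)
      omega
  exact ihd _ hlt _ _ _ P' Q' _ y' le_rfl hS

end

section Bezout
open Polynomial nonZeroDivisors

lemma bezout_poly (f g : Polynomial (Polynomial ℝ)) (hf : f ≠ 0)
    (hcop : ∀ d : Polynomial (Polynomial ℝ), d ∣ f → d ∣ g → IsUnit d) :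
    ∃ (R : Polynomial ℝ) (A B : Polynomial (Polynomial ℝ)), R ≠ 0 ∧
      f * A + g * B = Polynomial.C R := by
  classical
  let K := FractionRing (Polynomial ℝ)
  let φ : Polynomial ℝ →+* K := algebraMap (Polynomial ℝ) K
  have hφ : Function.Injective φ := IsFractionRing.injective (Polynomial ℝ) K
  let _inst : NormalizedGCDMonoid (Polynomial ℝ) := Classical.choice inferInstance
  by_cases hdeg : f.natDegree ≠ 0 ∨ g.natDegree ≠ 0
  · obtain ⟨A, B, _, _, h⟩ := Polynomial.exists_mul_add_mul_eq_C_resultant f g le_rfl le_rfl hdeg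
    refine ⟨_, A, B, ?_, h⟩
    intro h0
    have h1 : Polynomial.resultant (f.map φ) (g.map φ) = 0 := by
      rw [Polynomial.natDegree_map_eq_of_injective hφ, Polynomial.natDegree_map_eq_of_injective hφ,
        Polynomial.resultant_map_map, h0, map_zero]
    rw [Polynomial.resultant_eq_zero_iff] at h1
    apply h1.2
    rw [← isRelPrime_iff_isCoprime]
    intro d hdf hdg
    have hd0 : d ≠ 0 := by
      rintro rfl
      rw [zero_dvd_iff] at hdf
      exact hf ((Polynomial.map_eq_zero_iff hφ).1 hdf)
    obtain ⟨c, c0, hc⟩ := IsLocalization.integerNormalization_spec (Polynomial ℝ)⁰ d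
    set h := (IsLocalization.integerNormalization (Polynomial ℝ)⁰ d).primPart with hh
    have hprim : h.IsPrimitive := Polynomial.isPrimitive_primPart _
    have hdvd : h.map φ ∣ d := by
      rw [Algebra.smul_def, Polynomial.algebraMap_apply] at hc
      have h2 : h.map φ ∣ Polynomial.C (algebraMap (Polynomial ℝ) K c) * d := by
        rw [← hc]
        rw [(IsLocalization.integerNormalization (Polynomial ℝ)⁰ d).eq_C_content_mul_primPart,
          Polynomial.map_mul]
        exact Dvd.intro_left _ rfl
      have hu : IsUnit (Polynomial.C (algebraMap (Polynomial ℝ) K c)) := by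
        rw [Polynomial.isUnit_C]
        refine isUnit_iff_ne_zero.2 fun hz => ?_
        have : c = 0 := hφ (by rw [map_zero]; exact hz)
        exact nonZeroDivisors.ne_zero c0 this
      exact (hu.dvd_mul_left).1 h2
    have hu := hcop h (hprim.dvd_of_fraction_map_dvd_fraction_map (K := K) (hdvd.trans hdf))
      (hprim.dvd_of_fraction_map_dvd_fraction_map (K := K) (hdvd.trans hdg))
    exact Polynomial.isUnit_or_eq_zero_of_isUnit_integerNormalization_primPart hd0 hu
  · push Not at hdeg
    have h1 := Polynomial.eq_C_of_natDegree_eq_zero hdeg.1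
    refine ⟨f.coeff 0, 1, 0, ?_, ?_⟩
    · intro h0
      rw [h0] at h1
      exact hf (by simpa using h1)
    · rw [mul_one, mul_zero, add_zero]; exact h1

end Bezout

lemma ev_aeval (a b : Polynomial (Polynomial ℝ)) (p : MvPolynomial (Fin 2) ℝ) (x y : ℝ) :
    ev (MvPolynomial.aeval ![a, b] p) x y = pev p (ev a x y, ev b x y) := by
  induction p using MvPolynomial.induction_on with
  | C r => simp [ev, pev, Polynomial.algebraMap_apply, Polynomial.evalEval_C]
  | add p q hp hq =>
    simp only [ev, pev, map_add, Polynomial.evalEval_add] at *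
    rw [hp, hq]
  | mul_X p i hp =>
    simp only [ev, pev, map_mul, Polynomial.evalEval_mul] at *
    rw [hp]
    fin_cases i <;> simp

lemma pev_equiv (f : Polynomial (Polynomial ℝ)) (v : ℝ × ℝ) :
    pev (Polynomial.Bivariate.equivMvPolynomial ℝ f) v = f.evalEval v.1 v.2 := by
  have : f = (MvPolynomial.aeval (R := ℝ)
      (![Polynomial.C Polynomial.X, Polynomial.X] : Fin 2 → Polynomial (Polynomial ℝ))
      (Polynomial.Bivariate.equivMvPolynomial ℝ f)) := by
    set p := Polynomial.Bivariate.equivMvPolynomial ℝ f with hp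
    have h : f = (Polynomial.Bivariate.equivMvPolynomial ℝ).symm p := by simp [hp]
    rw [h]
    have : ((Polynomial.Bivariate.equivMvPolynomial ℝ).symm.toAlgHom :
        MvPolynomial (Fin 2) ℝ →ₐ[ℝ] Polynomial (Polynomial ℝ)) =
      MvPolynomial.aeval (![Polynomial.C Polynomial.X, Polynomial.X] :
        Fin 2 → Polynomial (Polynomial ℝ)) := by
      apply MvPolynomial.algHom_ext
      intro i
      fin_cases i <;> simp
    exact DFunLike.congr_fun this p
  conv_rhs => rw [this]
  have := ev_aeval (Polynomial.C Polynomial.X) Polynomial.X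
    (Polynomial.Bivariate.equivMvPolynomial ℝ f) v.2 v.1
  rw [ev] at this
  rw [this]
  simp [ev, Polynomial.evalEval_C]

lemma bezout_x (p q : MvPolynomial (Fin 2) ℝ) (hp : p ≠ 0)
    (hcop : ∀ d : MvPolynomial (Fin 2) ℝ, d ∣ p → d ∣ q → IsUnit d) :
    ∃ (R : Polynomial ℝ) (A B : MvPolynomial (Fin 2) ℝ), R ≠ 0 ∧
      ∀ v : ℝ × ℝ, pev p v * pev A v + pev q v * pev B v = R.eval v.1 := by
  let e := Polynomial.Bivariate.equivMvPolynomial ℝ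
  obtain ⟨R, A, B, hR, h⟩ := bezout_poly (e.symm p) (e.symm q) (by simpa using hp) (by
    intro d hd1 hd2
    have h1 : e d ∣ p := by simpa using map_dvd e hd1
    have h2 : e d ∣ q := by simpa using map_dvd e hd2
    have h3 := hcop (e d) h1 h2
    simpa using h3.map e.symm)
  refine ⟨R, e A, e B, hR, fun v => ?_⟩
  have h2 := congrArg e h
  simp only [map_add, map_mul, AlgEquiv.apply_symm_apply] at h2
  have h3 := congrArg (fun r => pev r v) h2
  simp only [e, pev_equiv, Polynomial.evalEval_C] at h3
  rw [← h3]
  simp [pev, e]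

lemma pev_rename (p : MvPolynomial (Fin 2) ℝ) (v : ℝ × ℝ) :
    pev (MvPolynomial.rename (Equiv.swap (0 : Fin 2) 1) p) v = pev p (v.2, v.1) := by
  rw [pev, pev, MvPolynomial.eval_rename]
  congr 2
  funext i
  fin_cases i <;> simp

lemma bezout_y (p q : MvPolynomial (Fin 2) ℝ) (hp : p ≠ 0)
    (hcop : ∀ d : MvPolynomial (Fin 2) ℝ, d ∣ p → d ∣ q → IsUnit d) :
    ∃ (R : Polynomial ℝ) (A B : MvPolynomial (Fin 2) ℝ), R ≠ 0 ∧
      ∀ v : ℝ × ℝ, pev p v * pev A v + pev q v * pev B v = R.eval v.2 := by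
  let e := MvPolynomial.renameEquiv ℝ (Equiv.swap (0 : Fin 2) 1)
  obtain ⟨R, A, B, hR, h⟩ := bezout_x (e p) (e q) (by simpa using hp) (by
    intro d hd1 hd2
    have h1 : e.symm d ∣ p := by simpa using map_dvd e.symm hd1
    have h2 : e.symm d ∣ q := by simpa using map_dvd e.symm hd2
    have h3 := hcop _ h1 h2
    simpa using h3.map e)
  refine ⟨R, e A, e B, hR, fun v => ?_⟩
  have := h (v.2, v.1)
  simp only [e, MvPolynomial.renameEquiv_apply, pev_rename] at this ⊢
  exact this

lemma exists_pow_mul (P : Polynomial (Polynomial ℝ)) (h : P ≠ 0) :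
    ∃ (α : ℕ) (P' : Polynomial (Polynomial ℝ)), P'.coeff 0 ≠ 0 ∧
      ∀ x y, ev P x y = x ^ α * ev P' x y := by
  obtain ⟨P', h1, h2⟩ := Polynomial.exists_eq_pow_rootMultiplicity_mul_and_not_dvd P h 0
  rw [Polynomial.C_0, sub_zero] at h1 h2
  refine ⟨P.rootMultiplicity 0, P', fun h3 => h2 (Polynomial.X_dvd_iff.2 h3), fun x y => ?_⟩
  conv_lhs => rw [h1]
  simp [ev, Polynomial.evalEval_mul, Polynomial.evalEval_pow]

lemma exists_pow_mul' (R : Polynomial ℝ) (h : R ≠ 0) {ι : Type*} {l : Filter ι} {x : ι → ℝ}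
    (hx : Tendsto x l (𝓝 0)) : ∃ N : ℕ, (fun n => x n ^ N) =O[l] fun n => R.eval (x n) := by
  obtain ⟨S, h1, h2⟩ := Polynomial.exists_eq_pow_rootMultiplicity_mul_and_not_dvd R h 0
  rw [Polynomial.C_0, sub_zero] at h1 h2
  have h3 : S.eval 0 ≠ 0 := by
    rw [← Polynomial.coeff_zero_eq_eval_zero]
    exact fun h3 => h2 (Polynomial.X_dvd_iff.2 h3)
  refine ⟨R.rootMultiplicity 0, ?_⟩
  have h4 : Tendsto (fun n => S.eval (x n)) l (𝓝 (S.eval 0)) := (S.continuous.tendsto 0).comp hx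
  have h5 : (fun _ => (1 : ℝ)) =O[l] fun n => S.eval (x n) := by
    rw [isBigO_const_left_iff_pos_le_norm (one_ne_zero)]
    refine ⟨|S.eval 0| / 2, by positivity, ?_⟩
    have := h4.norm.eventually (lt_mem_nhds (show |S.eval 0| / 2 < ‖S.eval 0‖ by
      rw [Real.norm_eq_abs]; linarith [abs_pos.2 h3]))
    filter_upwards [this] with n hn using hn.le
  have h6 := (isBigO_refl (fun n => x n ^ R.rootMultiplicity 0) l).mul h5
  refine h6.congr (fun n => by simp) (fun n => ?_)
  conv_rhs => rw [h1]
  simp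

lemma pev_continuous (p : MvPolynomial (Fin 2) ℝ) : Continuous (pev p) := by
  unfold pev
  refine (MvPolynomial.continuous_eval p).comp ?_
  refine continuous_pi fun i => ?_
  fin_cases i <;> simp <;> fun_prop

lemma sector (p q : MvPolynomial (Fin 2) ℝ) {ι : Type*} (U : Ultrafilter ι) (x y : ι → ℝ)
    (g : ℝ → ℝ → ℝ × ℝ) (a b : ℝ → Polynomial (Polynomial ℝ))
    (hg : ∀ t s z, (ev (a t) s z, ev (b t) s z) = g s (s * (t + z)))
    (hx : Tendsto x U (𝓝 0)) (hpos : ∀ᶠ n in (U : Filter ι), 0 < x n)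
    (hy : ∀ᶠ n in (U : Filter ι), |y n| ≤ x n)
    (hp : ∀ᶠ n in (U : Filter ι), pev p (g (x n) (y n)) ≠ 0)
    (hq : ∀ᶠ n in (U : Filter ι), pev q (g (x n) (y n)) ≠ 0)
    (ho : (fun n => pev q (g (x n) (y n))) =o[(U : Filter ι)] fun n => pev p (g (x n) (y n)))
    (N : ℕ) (hN : (fun n => x n ^ N) =O[(U : Filter ι)] fun n => pev p (g (x n) (y n))) :
    ∃ F : ℚ →₀ ℝ, (∀ e ∈ F.support, 1 ≤ e) ∧
      (fun s => pev q (g s (Fev F s))) =o[𝓝[>] 0] fun s => pev p (g s (Fev F s)) := by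
  obtain ⟨t, ht⟩ : ∃ t, Tendsto (fun n => y n / x n) U (𝓝 t) := by
    rcases ultra_dichotomy U (fun n => y n / x n) with h | h
    · exact h
    · exfalso
      obtain ⟨n, hn1, hn2, hn3⟩ := ((h.eventually_gt_atTop 1).and (hpos.and hy)).exists
      rw [abs_div, abs_of_pos hn2, lt_div_iff₀ hn2] at hn1
      linarith
  have key : ∀ (r : MvPolynomial (Fin 2) ℝ) (s z : ℝ),
      ev (MvPolynomial.aeval ![a t, b t] r) s z = pev r (g s (s * (t + z))) := by
    intro r s z
    rw [ev_aeval, hg]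
  have e1 : ∀ᶠ n in (U : Filter ι), x n * (t + (y n / x n - t)) = y n := by
    filter_upwards [hpos] with n hn
    field_simp
    ring
  have hne : ∀ r : MvPolynomial (Fin 2) ℝ, (∀ᶠ n in (U : Filter ι), pev r (g (x n) (y n)) ≠ 0) →
      MvPolynomial.aeval ![a t, b t] r ≠ 0 := by
    intro r hr h0
    obtain ⟨n, h1, h2⟩ := (hr.and e1).exists
    have := key r (x n) (y n / x n - t)
    rw [h0, h2] at this
    exact h1 (by rw [← this]; simp [ev])
  obtain ⟨α, P', hP0, hP⟩ := exists_pow_mul _ (hne p hp)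
  obtain ⟨β, Q', hQ0, hQ⟩ := exists_pow_mul _ (hne q hq)
  simp only [key] at hP hQ
  have eP : ∀ᶠ n in (U : Filter ι), pev p (g (x n) (y n)) = x n ^ α * ev P' (x n) (y n / x n - t) := by
    filter_upwards [e1] with n hn
    rw [← hP, hn]
  have eQ : ∀ᶠ n in (U : Filter ι), pev q (g (x n) (y n)) = x n ^ β * ev Q' (x n) (y n / x n - t) := by
    filter_upwards [e1] with n hn
    rw [← hQ, hn]
  have st : St U α β N P' Q' x (fun n => y n / x n - t) :=
    ⟨hP0, hQ0, hx, hpos, by simpa using ht.sub_const t, hN.congr' EventuallyEq.rfl eP, ho.congr' eQ eP⟩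
  obtain ⟨F, hF, h⟩ := key_induction U _ N α β P' Q' x _ le_rfl st
  refine ⟨Finsupp.single ((1 : ℕ) : ℚ) t + F.mapDomain (fun e => ((1 : ℕ) : ℚ) + e), ?_, ?_⟩
  · intro e he
    have := support_blow F hF 1 t e he
    exact_mod_cast this
  · refine h.congr' ?_ ?_
    · filter_upwards [self_mem_nhdsWithin] with s hs
      rw [Fev_blow F 1 t s hs, ← hQ, pow_one]
    · filter_upwards [self_mem_nhdsWithin] with s hs
      rw [Fev_blow F 1 t s hs, ← hP, pow_one]

lemma bezout_bound (p q A B : MvPolynomial (Fin 2) ℝ) (R : Polynomial ℝ) (hR : R ≠ 0)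
    {ι : Type*} {l : Filter ι} (v : ι → ℝ × ℝ) (v₀ : ℝ × ℝ) (hv : Tendsto v l (𝓝 v₀))
    (x : ι → ℝ) (hx : Tendsto x l (𝓝 0)) (c ε : ℝ) (hε : ε ≠ 0)
    (h : ∀ n, pev p (v n) * pev A (v n) + pev q (v n) * pev B (v n) = R.eval (c + ε * x n))
    (ho : (fun n => pev q (v n)) =o[l] fun n => pev p (v n)) :
    ∃ N : ℕ, (fun n => x n ^ N) =O[l] fun n => pev p (v n) := by
  have hd : (Polynomial.C c + Polynomial.C ε * Polynomial.X : Polynomial ℝ).natDegree = 1 := by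
    rw [add_comm]; exact Polynomial.natDegree_linear hε
  have hR1 : R.comp (Polynomial.C c + Polynomial.C ε * Polynomial.X) ≠ 0 := by
    intro h0
    rw [Polynomial.comp_eq_zero_iff] at h0
    rcases h0 with h0 | h0
    · exact hR h0
    · rw [h0.2, Polynomial.natDegree_C] at hd
      omega
  obtain ⟨N, hN⟩ := exists_pow_mul' _ hR1 hx
  refine ⟨N, hN.trans ?_⟩
  have hA : (fun n => pev A (v n)) =O[l] fun _ => (1 : ℝ) :=
    (((pev_continuous A).tendsto v₀).comp hv).isBigO_one ℝ
  have hB : (fun n => pev B (v n)) =O[l] fun _ => (1 : ℝ) :=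
    (((pev_continuous B).tendsto v₀).comp hv).isBigO_one ℝ
  have h1 := ((isBigO_refl (fun n => pev p (v n)) l).mul hA).add (ho.isBigO.mul hB)
  refine h1.congr (fun n => ?_) (fun n => by simp)
  rw [h n]
  simp

lemma typeI_of (F : ℚ →₀ ℝ) (hF : ∀ e ∈ F.support, 1 ≤ e) : TypeI (fun t => Fev F |t|) := by
  refine ⟨F.support.card, fun k => F (F.support.orderEmbOfFin rfl k),
    fun k => F.support.orderEmbOfFin rfl k, ?_, ?_, ?_, ?_⟩
  · intro k
    exact Finsupp.mem_support_iff.1 (F.support.orderEmbOfFin_mem rfl k)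
  · exact (F.support.orderEmbOfFin rfl).strictMono
  · intro k
    exact hF _ (F.support.orderEmbOfFin_mem rfl k)
  · intro t
    simp only [Fev, Finsupp.sum]
    rw [← Finset.sum_coe_sort, ← (F.support.orderIsoOfFin rfl).toEquiv.sum_comp]
    simp

lemma tendsto_of_isLittleO {ι : Type*} {l : Filter ι} {f g : ι → ℝ} (h : g =o[l] f)
    (hg : ∀ᶠ n in l, g n ≠ 0) : Tendsto (fun n => |f n / g n|) l atTop := by
  rw [tendsto_atTop]
  intro M
  have h1 := h.def (show (0 : ℝ) < 1 / (|M| + 1) by positivity)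
  filter_upwards [h1, hg] with n hn h0
  rw [Real.norm_eq_abs, Real.norm_eq_abs] at hn
  rw [abs_div, le_div_iff₀ (abs_pos.2 h0)]
  have h2 : |g n| * (|M| + 1) ≤ |f n| := by
    rw [div_mul_eq_mul_div, one_mul, le_div_iff₀ (by positivity)] at hn
    exact hn
  nlinarith [le_abs_self M, abs_nonneg (g n)]

lemma tendsto_side (ε c : ℝ) (S : Set ℝ) (hS : ∀ x ∈ S, 0 < ε * (x - c)) :
    Tendsto (fun x => ε * (x - c)) (𝓝[S] c) (𝓝[>] 0) := by
  rw [tendsto_nhdsWithin_iff]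
  refine ⟨?_, ?_⟩
  · have : Continuous fun x : ℝ => ε * (x - c) := by fun_prop
    have h := this.tendsto c
    simp only [sub_self, mul_zero] at h
    exact h.mono_left nhdsWithin_le_nhds
  · filter_upwards [self_mem_nhdsWithin] with x hx using hS x hx

lemma abs_side {ε x : ℝ} (hε : ε = 1 ∨ ε = -1) (h : 0 < ε * x) : |x| = ε * x := by
  rcases hε with rfl | rfl
  · rw [one_mul] at *
    exact abs_of_pos h
  · rw [neg_one_mul] at *
    exact abs_of_neg (by linarith)

lemma sq_side {ε : ℝ} (hε : ε = 1 ∨ ε = -1) (c x : ℝ) : c + ε * (ε * (x - c)) = x := by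
  rcases hε with rfl | rfl <;> ring

lemma sector_x (p q : MvPolynomial (Fin 2) ℝ) (hp0 : p ≠ 0)
    (hcop : ∀ d : MvPolynomial (Fin 2) ℝ, d ∣ p → d ∣ q → IsUnit d) (x₀ y₀ : ℝ)
    (U : Ultrafilter (ℝ × ℝ)) (hU : (U : Filter (ℝ × ℝ)) ≤ 𝓝 (x₀, y₀))
    (hp : ∀ᶠ v in (U : Filter (ℝ × ℝ)), pev p v ≠ 0)
    (hq : ∀ᶠ v in (U : Filter (ℝ × ℝ)), pev q v ≠ 0)
    (ho : pev q =o[(U : Filter (ℝ × ℝ))] pev p) (ε : ℝ) (hε : ε = 1 ∨ ε = -1)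
    (hpos : ∀ᶠ v in (U : Filter (ℝ × ℝ)), 0 < ε * (v.1 - x₀))
    (hy : ∀ᶠ v in (U : Filter (ℝ × ℝ)), |v.2 - y₀| ≤ |v.1 - x₀|) :
    ∃ F : ℚ →₀ ℝ, (∀ e ∈ F.support, 1 ≤ e) ∧
      ∀ S : Set ℝ, (∀ x ∈ S, 0 < ε * (x - x₀) ∧ pev q (x, y₀ + Fev F |x - x₀|) ≠ 0) →
        Tendsto (fun x => |pev p (x, y₀ + Fev F |x - x₀|) / pev q (x, y₀ + Fev F |x - x₀|)|)
          (𝓝[S] x₀) atTop := by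
  have hε0 : ε ≠ 0 := by rcases hε with rfl | rfl <;> norm_num
  have hx : Tendsto (fun v : ℝ × ℝ => ε * (v.1 - x₀)) U (𝓝 0) := by
    have : Continuous fun v : ℝ × ℝ => ε * (v.1 - x₀) := by fun_prop
    have h := this.tendsto (x₀, y₀)
    simp only [sub_self, mul_zero] at h
    exact h.mono_left hU
  obtain ⟨R, A, B, hR, h⟩ := bezout_x p q hp0 hcop
  obtain ⟨N, hN⟩ := bezout_bound p q A B R hR (l := (U : Filter (ℝ × ℝ))) (fun v => v) (x₀, y₀) hU
    (fun v => ε * (v.1 - x₀)) hx x₀ ε hε0 (fun v => by rw [h v, sq_side hε]) ho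
  have hv : ∀ v : ℝ × ℝ, (x₀ + ε * (ε * (v.1 - x₀)), y₀ + (v.2 - y₀)) = v := by
    intro v
    rw [sq_side hε, add_sub_cancel]
  obtain ⟨F, hF, h2⟩ := sector p q U (fun v => ε * (v.1 - x₀)) (fun v => v.2 - y₀)
    (fun s w => (x₀ + ε * s, y₀ + w))
    (fun _ => Polynomial.C (Polynomial.C x₀) + Polynomial.C (Polynomial.C ε) * Polynomial.X)
    (fun t => Polynomial.C (Polynomial.C y₀) + Polynomial.X * (Polynomial.C (Polynomial.C t) +
      Polynomial.C Polynomial.X))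
    (by intro t s z; simp [ev, Polynomial.evalEval])
    hx hpos (by filter_upwards [hpos, hy] with v h1 h2; rwa [← abs_side hε h1])
    (by simpa only [hv] using hp) (by simpa only [hv] using hq) (by simpa only [hv] using ho) N
    (by simpa only [hv] using hN)
  refine ⟨F, hF, fun S hS => ?_⟩
  have h3 := h2.comp_tendsto (tendsto_side ε x₀ S fun x hx => (hS x hx).1)
  have h4 : ∀ r : MvPolynomial (Fin 2) ℝ, ∀ x ∈ S,
      pev r (x₀ + ε * (ε * (x - x₀)), y₀ + Fev F (ε * (x - x₀))) =
        pev r (x, y₀ + Fev F |x - x₀|) := by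
    intro r x hx
    rw [sq_side hε, abs_side hε (hS x hx).1]
  refine tendsto_of_isLittleO (h3.congr' ?_ ?_) ?_
  · filter_upwards [self_mem_nhdsWithin] with x hx using h4 q x hx
  · filter_upwards [self_mem_nhdsWithin] with x hx using h4 p x hx
  · filter_upwards [self_mem_nhdsWithin] with x hx using (hS x hx).2

lemma sector_y (p q : MvPolynomial (Fin 2) ℝ) (hp0 : p ≠ 0)
    (hcop : ∀ d : MvPolynomial (Fin 2) ℝ, d ∣ p → d ∣ q → IsUnit d) (x₀ y₀ : ℝ)
    (U : Ultrafilter (ℝ × ℝ)) (hU : (U : Filter (ℝ × ℝ)) ≤ 𝓝 (x₀, y₀))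
    (hp : ∀ᶠ v in (U : Filter (ℝ × ℝ)), pev p v ≠ 0)
    (hq : ∀ᶠ v in (U : Filter (ℝ × ℝ)), pev q v ≠ 0)
    (ho : pev q =o[(U : Filter (ℝ × ℝ))] pev p) (ε : ℝ) (hε : ε = 1 ∨ ε = -1)
    (hpos : ∀ᶠ v in (U : Filter (ℝ × ℝ)), 0 < ε * (v.2 - y₀))
    (hy : ∀ᶠ v in (U : Filter (ℝ × ℝ)), |v.1 - x₀| ≤ |v.2 - y₀|) :
    ∃ F : ℚ →₀ ℝ, (∀ e ∈ F.support, 1 ≤ e) ∧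
      ∀ S : Set ℝ, (∀ y ∈ S, 0 < ε * (y - y₀) ∧ pev q (x₀ + Fev F |y - y₀|, y) ≠ 0) →
        Tendsto (fun y => |pev p (x₀ + Fev F |y - y₀|, y) / pev q (x₀ + Fev F |y - y₀|, y)|)
          (𝓝[S] y₀) atTop := by
  have hε0 : ε ≠ 0 := by rcases hε with rfl | rfl <;> norm_num
  have hx : Tendsto (fun v : ℝ × ℝ => ε * (v.2 - y₀)) U (𝓝 0) := by
    have : Continuous fun v : ℝ × ℝ => ε * (v.2 - y₀) := by fun_prop
    have h := this.tendsto (x₀, y₀)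
    simp only [sub_self, mul_zero] at h
    exact h.mono_left hU
  obtain ⟨R, A, B, hR, h⟩ := bezout_y p q hp0 hcop
  obtain ⟨N, hN⟩ := bezout_bound p q A B R hR (l := (U : Filter (ℝ × ℝ))) (fun v => v) (x₀, y₀) hU
    (fun v => ε * (v.2 - y₀)) hx y₀ ε hε0 (fun v => by rw [h v, sq_side hε]) ho
  have hv : ∀ v : ℝ × ℝ, (x₀ + (v.1 - x₀), y₀ + ε * (ε * (v.2 - y₀))) = v := by
    intro v
    rw [sq_side hε, add_sub_cancel]
  obtain ⟨F, hF, h2⟩ := sector p q U (fun v => ε * (v.2 - y₀)) (fun v => v.1 - x₀)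
    (fun s w => (x₀ + w, y₀ + ε * s))
    (fun t => Polynomial.C (Polynomial.C x₀) + Polynomial.X * (Polynomial.C (Polynomial.C t) +
      Polynomial.C Polynomial.X))
    (fun _ => Polynomial.C (Polynomial.C y₀) + Polynomial.C (Polynomial.C ε) * Polynomial.X)
    (by intro t s z; simp [ev, Polynomial.evalEval])
    hx hpos (by filter_upwards [hpos, hy] with v h1 h2; rwa [← abs_side hε h1])
    (by simpa only [hv] using hp) (by simpa only [hv] using hq) (by simpa only [hv] using ho) N
    (by simpa only [hv] using hN)
  refine ⟨F, hF, fun S hS => ?_⟩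
  have h3 := h2.comp_tendsto (tendsto_side ε y₀ S fun x hx => (hS x hx).1)
  have h4 : ∀ r : MvPolynomial (Fin 2) ℝ, ∀ y ∈ S,
      pev r (x₀ + Fev F (ε * (y - y₀)), y₀ + ε * (ε * (y - y₀))) =
        pev r (x₀ + Fev F |y - y₀|, y) := by
    intro r x hx
    rw [sq_side hε, abs_side hε (hS x hx).1]
  refine tendsto_of_isLittleO (h3.congr' ?_ ?_) ?_
  · filter_upwards [self_mem_nhdsWithin] with x hx using h4 q x hx
  · filter_upwards [self_mem_nhdsWithin] with x hx using h4 p x hx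
  · filter_upwards [self_mem_nhdsWithin] with x hx using (hS x hx).2

lemma exists_ultra (p q : MvPolynomial (Fin 2) ℝ) (x₀ y₀ : ℝ)
    (hub : ∀ U ∈ nhds ((x₀, y₀) : ℝ × ℝ), ∀ M : ℝ,
      ∃ v ∈ U, pev q v ≠ 0 ∧ M < |pev p v / pev q v|) :
    ∃ U : Ultrafilter (ℝ × ℝ), (U : Filter (ℝ × ℝ)) ≤ 𝓝 (x₀, y₀) ∧
      Tendsto (fun v => |pev p v / pev q v|) U atTop := by
  have hne : (𝓝 (x₀, y₀) ⊓ comap (fun v => |pev p v / pev q v|) atTop).NeBot := by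
    rw [inf_neBot_iff]
    intro s hs s' hs'
    obtain ⟨t, ht, hts⟩ := mem_comap.1 hs'
    obtain ⟨M, hM⟩ := mem_atTop_sets.1 ht
    obtain ⟨v, hv, _, h⟩ := hub s hs M
    exact ⟨v, hv, hts (hM _ h.le)⟩
  refine ⟨@Ultrafilter.of _ _ hne, (Ultrafilter.of_le _).trans inf_le_left, ?_⟩
  rw [tendsto_iff_comap]
  exact (Ultrafilter.of_le _).trans inf_le_right
/-- If a rational function is unbounded on every punctured neighborhood of `(x₀,y₀)`,
then it tends to infinity in absolute value along some one-sided type (i) curve. -/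
theorem unbounded_implies_infinite_on_typeI_curve (p q : MvPolynomial (Fin 2) ℝ)
    (hq : q ≠ 0) (hcop : ∀ d : MvPolynomial (Fin 2) ℝ, d ∣ p → d ∣ q → IsUnit d)
    (x₀ y₀ : ℝ)
    (hub : ∀ U ∈ nhds ((x₀, y₀) : ℝ × ℝ), ∀ M : ℝ,
      ∃ v ∈ U, pev q v ≠ 0 ∧ M < |pev p v / pev q v|) :
    ∃ Φ : ℝ → ℝ, TypeI Φ ∧
      (Tendsto (fun x => |pev p (x, y₀ + Φ (x - x₀)) / pev q (x, y₀ + Φ (x - x₀))|)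
          (𝓝[{x : ℝ | x₀ < x ∧ pev q (x, y₀ + Φ (x - x₀)) ≠ 0}] x₀) atTop ∨
       Tendsto (fun x => |pev p (x, y₀ + Φ (x - x₀)) / pev q (x, y₀ + Φ (x - x₀))|)
          (𝓝[{x : ℝ | x < x₀ ∧ pev q (x, y₀ + Φ (x - x₀)) ≠ 0}] x₀) atTop ∨
       Tendsto (fun y => |pev p (x₀ + Φ (y - y₀), y) / pev q (x₀ + Φ (y - y₀), y)|)
          (𝓝[{y : ℝ | y₀ < y ∧ pev q (x₀ + Φ (y - y₀), y) ≠ 0}] y₀) atTop ∨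
       Tendsto (fun y => |pev p (x₀ + Φ (y - y₀), y) / pev q (x₀ + Φ (y - y₀), y)|)
          (𝓝[{y : ℝ | y < y₀ ∧ pev q (x₀ + Φ (y - y₀), y) ≠ 0}] y₀) atTop) := by
  obtain ⟨U, hU, hinf⟩ := exists_ultra p q x₀ y₀ hub
  have hpq : ∀ᶠ v in (U : Filter (ℝ × ℝ)), pev p v ≠ 0 ∧ pev q v ≠ 0 := by
    filter_upwards [hinf.eventually_gt_atTop 0] with v hv
    have := abs_pos.1 hv
    rw [div_ne_zero_iff] at this
    exact this
  have hp : ∀ᶠ v in (U : Filter (ℝ × ℝ)), pev p v ≠ 0 := hpq.mono fun _ h => h.1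
  have hq' : ∀ᶠ v in (U : Filter (ℝ × ℝ)), pev q v ≠ 0 := hpq.mono fun _ h => h.2
  have hp0 : p ≠ 0 := by
    rintro rfl
    obtain ⟨v, hv⟩ := hp.exists
    exact hv (by simp [pev])
  have ho : pev q =o[(U : Filter (ℝ × ℝ))] pev p := by
    rw [isLittleO_iff]
    intro c hc
    filter_upwards [hinf.eventually_gt_atTop (1 / c), hq'] with v h1 h2
    rw [abs_div, lt_div_iff₀ (abs_pos.2 h2), div_mul_eq_mul_div, one_mul, div_lt_iff₀ hc] at h1
    rw [Real.norm_eq_abs, Real.norm_eq_abs]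
    linarith
  have hne : ∀ᶠ v in (U : Filter (ℝ × ℝ)), v ≠ (x₀, y₀) := by
    filter_upwards [hinf.eventually_gt_atTop |pev p (x₀, y₀) / pev q (x₀, y₀)|] with v hv h
    rw [h] at hv
    exact lt_irrefl _ hv
  have hsplit : ∀ᶠ v in (U : Filter (ℝ × ℝ)),
      ((0 < 1 * (v.1 - x₀) ∧ |v.2 - y₀| ≤ |v.1 - x₀|) ∨
        (0 < -1 * (v.1 - x₀) ∧ |v.2 - y₀| ≤ |v.1 - x₀|)) ∨
      ((0 < 1 * (v.2 - y₀) ∧ |v.1 - x₀| ≤ |v.2 - y₀|) ∨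
        (0 < -1 * (v.2 - y₀) ∧ |v.1 - x₀| ≤ |v.2 - y₀|)) := by
    filter_upwards [hne] with v hv
    rcases le_total |v.2 - y₀| |v.1 - x₀| with h | h
    · left
      rcases lt_trichotomy v.1 x₀ with h1 | h1 | h1
      · exact Or.inr ⟨by linarith, h⟩
      · exfalso
        rw [h1, sub_self, abs_zero] at h
        have := abs_eq_zero.1 (le_antisymm h (abs_nonneg _))
        exact hv (Prod.ext h1 (by simpa using sub_eq_zero.1 this))
      · exact Or.inl ⟨by linarith, h⟩
    · right
      rcases lt_trichotomy v.2 y₀ with h1 | h1 | h1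
      · exact Or.inr ⟨by linarith, h⟩
      · exfalso
        rw [h1, sub_self, abs_zero] at h
        have := abs_eq_zero.1 (le_antisymm h (abs_nonneg _))
        exact hv (Prod.ext (by simpa using sub_eq_zero.1 this) h1)
      · exact Or.inl ⟨by linarith, h⟩
  rw [Ultrafilter.eventually_or, Ultrafilter.eventually_or, Ultrafilter.eventually_or] at hsplit
  rcases hsplit with (h | h) | (h | h)
  · obtain ⟨F, hF, hS⟩ := sector_x p q hp0 hcop x₀ y₀ U hU hp hq' ho 1 (Or.inl rfl)
      (h.mono fun _ h => h.1) (h.mono fun _ h => h.2)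
    refine ⟨_, typeI_of F hF, Or.inl (hS _ ?_)⟩
    rintro x ⟨h1, h2⟩
    exact ⟨by linarith, h2⟩
  · obtain ⟨F, hF, hS⟩ := sector_x p q hp0 hcop x₀ y₀ U hU hp hq' ho (-1) (Or.inr rfl)
      (h.mono fun _ h => h.1) (h.mono fun _ h => h.2)
    refine ⟨_, typeI_of F hF, Or.inr (Or.inl (hS _ ?_))⟩
    rintro x ⟨h1, h2⟩
    exact ⟨by linarith, h2⟩
  · obtain ⟨F, hF, hS⟩ := sector_y p q hp0 hcop x₀ y₀ U hU hp hq' ho 1 (Or.inl rfl)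
      (h.mono fun _ h => h.1) (h.mono fun _ h => h.2)
    refine ⟨_, typeI_of F hF, Or.inr (Or.inr (Or.inl (hS _ ?_)))⟩
    rintro x ⟨h1, h2⟩
    exact ⟨by linarith, h2⟩
  · obtain ⟨F, hF, hS⟩ := sector_y p q hp0 hcop x₀ y₀ U hU hp hq' ho (-1) (Or.inr rfl)
      (h.mono fun _ h => h.1) (h.mono fun _ h => h.2)
    refine ⟨_, typeI_of F hF, Or.inr (Or.inr (Or.inr (hS _ ?_)))⟩
    rintro x ⟨h1, h2⟩
    exact ⟨by linarith, h2⟩
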